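/- Let A : ℝ → ℝ^{n×n} and C : ℝ → ℝ^{m×n} be such that there exist ā ≥ 1 with |Φ_A(t₁, t₂)| ≤ ā for all t₁, t₂ ≥ 0 and c̄ ≥ 1 with |C(t)| ≤ c̄ for all t ≥ 0, and suppose the pair (C, A) is asymptotically observable. Define L(t) := Φ_A(t,0) Φ_A(t,0)^T C(t)^T. Then for each connected interconnection Γ = [γ_ij] ∈ ℝ^{p×p}, the solutions x_i of the coupled array ẋ_i(t) = A(t) x_i(t) + L(t) C(t) Σ_{j≠i} γ_ij (x_j(t) − x_i(t)), i = 1,…,p, synchronize to x̄(t) := (r^T ⊗ Φ_A(t,0)) x(0), where x(0) ∈ ℝ^{np} stacks x_1(0),…,x_p(0) and r ∈ ℝ^p satisfies r^T Γ = 0 and r^T 1 = 1; that is, |x_i(t) − x̄(t)| → 0 as t → ∞ for each i. -/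

import Mathlib

open Matrix MeasureTheory Filter
open scoped Kronecker

noncomputable section

/-- Euclidean norm of a vector. -/
def eunorm {ι : Type*} [Fintype ι] (v : ι → ℝ) : ℝ := Real.sqrt (∑ i, v i ^ 2)

/-- Spectral (induced 2-) norm of a matrix. -/
def specNorm {m n : Type*} [Fintype m] [Fintype n] (M : Matrix m n ℝ) : ℝ :=
  sSup {c : ℝ | ∃ v : n → ℝ, eunorm v ≤ 1 ∧ c = eunorm (M.mulVec v)}

/-- Smallest singular value of a matrix. -/
def sigmaMin {m n : Type*} [Fintype m] [Fintype n] (M : Matrix m n ℝ) : ℝ :=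
  sInf {c : ℝ | ∃ v : n → ℝ, eunorm v = 1 ∧ c = eunorm (M.mulVec v)}

/-- Largest singular value of a matrix. -/
def sigmaMax {m n : Type*} [Fintype m] [Fintype n] (M : Matrix m n ℝ) : ℝ :=
  sSup {c : ℝ | ∃ v : n → ℝ, eunorm v = 1 ∧ c = eunorm (M.mulVec v)}

/-- A continuous-time interconnection matrix. -/
def IsInterconnection {p : ℕ} (Γ : Matrix (Fin p) (Fin p) ℝ) : Prop :=
  (∀ i j, i ≠ j → 0 ≤ Γ i j) ∧
  ∀ i, Γ i i = -∑ j ∈ Finset.univ.filter (fun j => j ≠ i), Γ i j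

/-- Connectedness of the graph of a matrix. -/
def ConnectedMat {p : ℕ} (Γ : Matrix (Fin p) (Fin p) ℝ) : Prop :=
  ∃ v : Fin p, ∀ u : Fin p, Relation.ReflTransGen (fun i j => 0 < Γ i j) u v

/-- Membership in `Q̄_n`: symmetric positive semidefinite with spectral norm at most 1. -/
def InQbar {n : ℕ} (R : Matrix (Fin n) (Fin n) ℝ) : Prop :=
  R.PosSemidef ∧ specNorm R ≤ 1

/-- `δ(ε, T) = min{ε/2, ε³/(240 T⁵)}`. -/
def deltaCT (ε T : ℝ) : ℝ := min (ε / 2) (ε ^ 3 / (240 * T ^ 5))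

/-- Sufficient excitation for `Q : ℝ≥0 → Q_n`. -/
def SuffExcitingCT {n : ℕ} (Q : ℝ → Matrix (Fin n) (Fin n) ℝ) : Prop :=
  ∃ ε T : ℕ → ℝ, (∀ i, 0 < ε i) ∧ (∀ i, 0 < T i) ∧
    (∀ i, ε i ≤ sigmaMin (Matrix.of fun a b =>
      ∫ t in (∑ j ∈ Finset.range i, T j)..((∑ j ∈ Finset.range i, T j) + T i), Q t a b)) ∧
    Tendsto (fun N => ∑ i ∈ Finset.range N, deltaCT (ε i) (T i)) atTop atTop

/-- Persistence of excitation for `Q : ℝ≥0 → Q_n`. -/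
def PersExcitingCT {n : ℕ} (Q : ℝ → Matrix (Fin n) (Fin n) ℝ) : Prop :=
  ∃ ε T : ℝ, 0 < ε ∧ 0 < T ∧ ∀ t : ℝ, 0 ≤ t →
    ε ≤ sigmaMin (Matrix.of fun a b => ∫ s in t..(t + T), Q s a b)

/-- The squared Frobenius norm of a real matrix. -/
def frobSq {ι κ : Type*} [Fintype ι] [Fintype κ] (M : Matrix ι κ ℝ) : ℝ := ∑ i, ∑ j, M i j ^ 2

section Frobenius

variable {ι κ μ : Type*} [Fintype ι] [Fintype κ] [Fintype μ]

lemma frobSq_nonneg (M : Matrix ι κ ℝ) : 0 ≤ frobSq M := by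
  unfold frobSq; positivity

lemma sq_entry_le_frobSq (M : Matrix ι κ ℝ) (i : ι) (j : κ) : M i j ^ 2 ≤ frobSq M :=
  (Finset.single_le_sum (f := fun j => M i j ^ 2) (fun _ _ => sq_nonneg _)
    (Finset.mem_univ j)).trans
  (Finset.single_le_sum (f := fun i => ∑ j, M i j ^ 2)
    (fun _ _ => Finset.sum_nonneg fun _ _ => sq_nonneg _) (Finset.mem_univ i))

lemma frobSq_transpose (M : Matrix ι κ ℝ) : frobSq Mᵀ = frobSq M :=
  Finset.sum_comm

lemma frobSq_mul_le (M : Matrix ι κ ℝ) (N : Matrix κ μ ℝ) :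
    frobSq (M * N) ≤ frobSq M * frobSq N := by
  rw [← frobSq_transpose N]
  unfold frobSq
  rw [Finset.sum_mul_sum]
  refine Finset.sum_le_sum fun i _ => Finset.sum_le_sum fun j _ => ?_
  exact Finset.sum_mul_sq_le_sq_mul_sq _ _ _

lemma frobSq_add_le (M N : Matrix ι κ ℝ) : frobSq (M + N) ≤ 2 * frobSq M + 2 * frobSq N := by
  unfold frobSq
  simp only [Finset.mul_sum, ← Finset.sum_add_distrib]
  refine Finset.sum_le_sum fun i _ => Finset.sum_le_sum fun j _ => ?_
  simp only [Matrix.add_apply]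
  nlinarith [sq_nonneg (M i j - N i j)]

lemma trace_transpose_mul_self (M : Matrix ι κ ℝ) : (Mᵀ * M).trace = frobSq M := by
  rw [← frobSq_transpose]
  simp [Matrix.trace, Matrix.mul_apply, frobSq, sq]

lemma trace_transpose_mul_le (M N : Matrix ι κ ℝ) :
    (Mᵀ * N).trace ≤ (frobSq M + frobSq N) / 2 := by
  rw [← frobSq_transpose M, ← frobSq_transpose N]
  simp only [Matrix.trace, Matrix.mul_apply, frobSq, Matrix.diag_apply, Matrix.transpose_apply]
  rw [← Finset.sum_add_distrib, Finset.sum_div]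
  refine Finset.sum_le_sum fun i _ => ?_
  rw [← Finset.sum_add_distrib, Finset.sum_div]
  refine Finset.sum_le_sum fun j _ => ?_
  nlinarith [sq_nonneg (M j i - N j i)]

lemma eunorm_sq (v : ι → ℝ) : eunorm v ^ 2 = ∑ i, v i ^ 2 :=
  Real.sq_sqrt (Finset.sum_nonneg fun _ _ => sq_nonneg _)

lemma eunorm_nonneg (v : ι → ℝ) : 0 ≤ eunorm v := Real.sqrt_nonneg _

lemma eunorm_mulVec_sq_le (M : Matrix ι κ ℝ) (v : κ → ℝ) :
    eunorm (M *ᵥ v) ^ 2 ≤ frobSq M * eunorm v ^ 2 := by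
  rw [eunorm_sq, eunorm_sq, frobSq, Finset.sum_mul]
  exact Finset.sum_le_sum fun i _ => Finset.sum_mul_sq_le_sq_mul_sq _ _ _

lemma eunorm_mulVec_le_specNorm (M : Matrix ι κ ℝ) {v : κ → ℝ} (hv : eunorm v ≤ 1) :
    eunorm (M *ᵥ v) ≤ specNorm M := by
  refine le_csSup ⟨Real.sqrt (frobSq M), ?_⟩ ⟨v, hv, rfl⟩
  rintro _ ⟨w, hw, rfl⟩
  refine Real.le_sqrt_of_sq_le ((eunorm_mulVec_sq_le M w).trans ?_)
  exact mul_le_of_le_one_right (frobSq_nonneg M) (pow_le_one₀ (eunorm_nonneg w) hw)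

lemma frobSq_le_card_mul_specNorm_sq [DecidableEq κ] (M : Matrix ι κ ℝ) :
    frobSq M ≤ Fintype.card κ * specNorm M ^ 2 := by
  rw [← frobSq_transpose, frobSq, ← nsmul_eq_mul, ← Finset.card_univ]
  refine Finset.sum_le_card_nsmul _ _ _ fun j _ => ?_
  have h1 : eunorm (Pi.single j (1 : ℝ)) ≤ 1 := by
    simp [eunorm, Pi.single_apply]
  have h2 := eunorm_mulVec_le_specNorm M h1
  have h3 := pow_le_pow_left₀ (eunorm_nonneg _) h2 2
  rw [eunorm_sq] at h3
  simpa using h3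

end Frobenius

/-- A symmetric positive semidefinite matrix dominates its smallest singular value. -/
lemma le_quadForm_of_le_sigmaMin {n : ℕ} {M : Matrix (Fin n) (Fin n) ℝ} (hM : M.PosSemidef)
    {ε : ℝ} (hε : ε ≤ sigmaMin M) (v : Fin n → ℝ) : ε * (v ⬝ᵥ v) ≤ v ⬝ᵥ M *ᵥ v := by
  have hH : (M - ε • (1 : Matrix (Fin n) (Fin n) ℝ)).IsHermitian :=
    hM.1.sub (by simp [Matrix.IsHermitian])
  have hps : (M - ε • (1 : Matrix (Fin n) (Fin n) ℝ)).PosSemidef := by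
    refine hH.posSemidef_iff_eigenvalues_nonneg.2 fun i => ?_
    obtain ⟨u, hu⟩ : ∃ u : Fin n → ℝ, u = hH.eigenvectorBasis i := ⟨_, rfl⟩
    obtain ⟨μ, hμ⟩ : ∃ μ : ℝ, μ = hH.eigenvalues i := ⟨_, rfl⟩
    have hb : eunorm u = 1 := by
      have := hH.eigenvectorBasis.orthonormal.1 i
      rw [EuclideanSpace.norm_eq] at this
      simpa [eunorm, hu] using this
    have huu : u ⬝ᵥ u = 1 := by
      have := eunorm_sq u
      rw [hb] at this
      simp only [dotProduct, ← sq]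
      linarith
    have hMu : M *ᵥ u = (μ + ε) • u := by
      have := hH.mulVec_eigenvectorBasis i
      rw [← hu, ← hμ, Matrix.sub_mulVec, Matrix.smul_mulVec, Matrix.one_mulVec] at this
      rw [add_smul, ← this]; abel
    have hnn : 0 ≤ μ + ε := by
      have := hM.dotProduct_mulVec_nonneg u
      simpa [hMu, huu] using this
    have h1 : sigmaMin M ≤ eunorm (M *ᵥ u) :=
      csInf_le ⟨0, by rintro _ ⟨w, _, rfl⟩; exact eunorm_nonneg _⟩ ⟨_, hb, rfl⟩
    have h2 : eunorm (M *ᵥ u) = μ + ε := by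
      rw [hMu, ← sq_eq_sq₀ (eunorm_nonneg _) hnn, eunorm_sq]
      simp only [Pi.smul_apply, smul_eq_mul, mul_pow, ← Finset.mul_sum]
      rw [← eunorm_sq, hb]; simp
    rw [Pi.zero_apply, ← hμ]
    linarith
  have := hps.dotProduct_mulVec_nonneg v
  simp only [star_trivial, Matrix.sub_mulVec, Matrix.smul_mulVec, dotProduct_sub,
    Matrix.one_mulVec, dotProduct_smul, smul_eq_mul] at this
  linarith

/-- Cauchy-Schwarz for increments: if `f' ^ 2 ≤ g'` then `(Δf) ^ 2 ≤ Δt * Δg`. -/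
lemma sq_sub_le_of_sq_deriv_le {f g f' g' : ℝ → ℝ} {s t : ℝ} (hst : s ≤ t)
    (hf : ∀ τ ∈ Set.Icc s t, HasDerivAt f (f' τ) τ)
    (hg : ∀ τ ∈ Set.Icc s t, HasDerivAt g (g' τ) τ)
    (h : ∀ τ ∈ Set.Icc s t, f' τ ^ 2 ≤ g' τ) :
    (f t - f s) ^ 2 ≤ (t - s) * (g t - g s) := by
  rcases hst.eq_or_lt with rfl | hlt
  · simp
  have key : ∀ l : ℝ, 0 ≤ (g t - g s) - 2 * l * (f t - f s) + l ^ 2 * (t - s) := by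
    intro l
    have hd : ∀ τ ∈ Set.Icc s t, HasDerivAt (fun τ => g τ - 2 * l * f τ + l ^ 2 * τ)
        (g' τ - 2 * l * f' τ + l ^ 2 * 1) τ := fun τ hτ =>
      ((hg τ hτ).sub ((hf τ hτ).const_mul _)).add ((hasDerivAt_id τ).const_mul _)
    have hm : MonotoneOn (fun τ => g τ - 2 * l * f τ + l ^ 2 * τ) (Set.Icc s t) := by
      refine monotoneOn_of_hasDerivWithinAt_nonneg (convex_Icc s t)
        (fun τ hτ => (hd τ hτ).continuousAt.continuousWithinAt)
        (fun τ hτ => (hd τ (interior_subset hτ)).hasDerivWithinAt) fun τ hτ => ?_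
      nlinarith [h τ (interior_subset hτ), sq_nonneg (f' τ - l)]
    have := hm (Set.left_mem_Icc.2 hst) (Set.right_mem_Icc.2 hst) hst
    simp only at this
    linarith
  have hpos : 0 < t - s := sub_pos.2 hlt
  have hk := mul_nonneg hpos.le (key ((f t - f s) / (t - s)))
  have : (t - s) * ((g t - g s) - 2 * ((f t - f s) / (t - s)) * (f t - f s)
      + ((f t - f s) / (t - s)) ^ 2 * (t - s)) = (t - s) * (g t - g s) - (f t - f s) ^ 2 := by
    field_simp; ring
  linarith

/-- A nonnegative sequence whose relative decrements are not summable tends to zero. -/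
lemma tendsto_zero_of_relative_decrement {V c : ℕ → ℝ} (hV : ∀ i, 0 ≤ V i) (hc : ∀ i, 0 ≤ c i)
    (h : ∀ i, c i * V i ≤ V i - V (i + 1))
    (hsum : Tendsto (fun N => ∑ i ∈ Finset.range N, c i) atTop atTop) :
    Tendsto V atTop (nhds 0) := by
  have hanti : Antitone V := antitone_nat_of_succ_le fun i => by
    nlinarith [h i, mul_nonneg (hc i) (hV i)]
  have hle : ∀ N, (∑ i ∈ Finset.range N, c i) * V N ≤ V 0 := by
    intro N
    have h1 : ∑ i ∈ Finset.range N, c i * V N ≤ ∑ i ∈ Finset.range N, (V i - V (i + 1)) :=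
      Finset.sum_le_sum fun i hi => (mul_le_mul_of_nonneg_left
        (hanti (Finset.mem_range.1 hi).le) (hc i)).trans (h i)
    rw [Finset.sum_range_sub', ← Finset.sum_mul] at h1
    linarith [hV N]
  refine tendsto_of_tendsto_of_tendsto_of_le_of_le' tendsto_const_nhds
    (hsum.const_div_atTop (V 0)) (Eventually.of_forall hV) ?_
  filter_upwards [hsum.eventually_gt_atTop 0] with N hN
  rw [le_div_iff₀ hN, mul_comm]
  exact hle N

section Interconnection

variable {p : ℕ}

lemma pow_entry_nonneg {S : Matrix (Fin p) (Fin p) ℝ} (h0 : ∀ i j, 0 ≤ S i j) (k : ℕ)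
    (i j : Fin p) : 0 ≤ (S ^ k) i j := by
  induction k generalizing i with
  | zero => rw [pow_zero, Matrix.one_apply]; split_ifs <;> norm_num
  | succ k ih =>
    rw [pow_succ', Matrix.mul_apply]
    exact Finset.sum_nonneg fun l _ => mul_nonneg (h0 i l) (ih l)

lemma vecMul_pow_eq_self {S : Matrix (Fin p) (Fin p) ℝ} {r : Fin p → ℝ} (hr : r ᵥ* S = r)
    (k : ℕ) : r ᵥ* (S ^ k) = r := by
  induction k with
  | zero => simp
  | succ k ih => rw [pow_succ, ← Matrix.vecMul_vecMul, ih, hr]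

/-- A row-stochastic matrix with a column bounded below by `β` contracts intervals by `1 - β`. -/
lemma exists_interval_mulVec {M : Matrix (Fin p) (Fin p) ℝ} (h0 : ∀ i j, 0 ≤ M i j)
    (h1 : ∀ i, ∑ j, M i j = 1) {v : Fin p} {β : ℝ} (hβ : ∀ i, β ≤ M i v)
    {x : Fin p → ℝ} {lo d : ℝ} (hx : ∀ i, lo ≤ x i ∧ x i ≤ lo + d) :
    ∃ lo', ∀ i, lo' ≤ (M *ᵥ x) i ∧ (M *ᵥ x) i ≤ lo' + (1 - β) * d := by
  refine ⟨lo + β * (x v - lo), fun i => ?_⟩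
  have key : ∀ y : Fin p → ℝ, (∀ j, 0 ≤ y j) → β * y v ≤ ∑ j, M i j * y j := fun y hy =>
    (mul_le_mul_of_nonneg_right (hβ i) (hy v)).trans
      (Finset.single_le_sum (f := fun j => M i j * y j)
        (fun j _ => mul_nonneg (h0 i j) (hy j)) (Finset.mem_univ v))
  have hlo := key (fun j => x j - lo) fun j => by linarith [(hx j).1]
  have hhi := key (fun j => lo + d - x j) fun j => by linarith [(hx j).2]
  simp only [mul_sub, Finset.sum_sub_distrib, ← Finset.sum_mul, h1] at hlo hhi
  simp only [Matrix.mulVec, dotProduct]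
  constructor <;> linarith

/-- Powers of such a matrix contract the hyperplane orthogonal to an invariant functional. -/
lemma exists_pow_mulVec_contract {M : Matrix (Fin p) (Fin p) ℝ} (h0 : ∀ i j, 0 ≤ M i j)
    (h1 : ∀ i, ∑ j, M i j = 1) {v : Fin p} {β : ℝ} (hβ0 : 0 < β) (hβ : ∀ i, β ≤ M i v)
    {r : Fin p → ℝ} (hr : r ᵥ* M = r) (hr1 : ∑ i, r i = 1) :
    ∃ k : ℕ, ∀ x : Fin p → ℝ, r ⬝ᵥ x = 0 →
      ((M ^ k) *ᵥ x) ⬝ᵥ ((M ^ k) *ᵥ x) ≤ (1 / 2) * (x ⬝ᵥ x) := by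
  have hβ1 : β ≤ 1 := (hβ v).trans
    ((Finset.single_le_sum (fun j _ => h0 v j) (Finset.mem_univ v)).trans_eq (h1 v))
  have hiter : ∀ (x : Fin p → ℝ) (k : ℕ), ∃ lo, ∀ i, lo ≤ ((M ^ k) *ᵥ x) i ∧
      ((M ^ k) *ᵥ x) i ≤ lo + (1 - β) ^ k * (2 * eunorm x) := by
    intro x k
    induction k with
    | zero =>
      refine ⟨-eunorm x, fun i => ?_⟩
      have : |x i| ≤ eunorm x := Real.le_sqrt_of_sq_le (by
        rw [sq_abs]
        exact Finset.single_le_sum (f := fun i => x i ^ 2) (fun _ _ => sq_nonneg _)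
          (Finset.mem_univ i))
      have := abs_le.1 this
      simp only [pow_zero, Matrix.one_mulVec]
      constructor <;> linarith
    | succ k ih =>
      obtain ⟨lo, hlo⟩ := ih
      obtain ⟨lo', hlo'⟩ := exists_interval_mulVec h0 h1 hβ hlo
      refine ⟨lo', fun i => ?_⟩
      rw [pow_succ', ← Matrix.mulVec_mulVec, pow_succ' (1 - β), mul_assoc]
      exact hlo' i
  set R := ∑ i, |r i| with hR
  have hlim : Tendsto (fun k : ℕ => (p : ℝ) * (R * ((1 - β) ^ k * 2)) ^ 2) atTop (nhds 0) := by
    have := tendsto_pow_atTop_nhds_zero_of_lt_one (r := 1 - β) (by linarith) (by linarith)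
    simpa using (((this.mul_const 2).const_mul R).pow 2).const_mul (p : ℝ)
  obtain ⟨k, hk⟩ := (hlim.eventually_lt_const (show (0 : ℝ) < 1 / 2 by norm_num)).exists
  refine ⟨k, fun x hx => ?_⟩
  obtain ⟨lo, hlo⟩ := hiter x k
  set y := (M ^ k) *ᵥ x with hy
  have hry : ∑ j, r j * y j = 0 := by
    change r ⬝ᵥ y = 0
    rw [hy, Matrix.dotProduct_mulVec, vecMul_pow_eq_self hr, hx]
  have hyi : ∀ i, y i ^ 2 ≤ (R * ((1 - β) ^ k * 2)) ^ 2 * eunorm x ^ 2 := by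
    intro i
    have h3 : y i = ∑ j, r j * (y i - y j) := by
      simp only [mul_sub, Finset.sum_sub_distrib, ← Finset.sum_mul, hr1, hry]; ring
    have h4 : |y i| ≤ R * ((1 - β) ^ k * (2 * eunorm x)) := by
      rw [h3, hR, Finset.sum_mul]
      refine (Finset.abs_sum_le_sum_abs _ _).trans (Finset.sum_le_sum fun j _ => ?_)
      rw [abs_mul]
      refine mul_le_mul_of_nonneg_left ?_ (abs_nonneg _)
      rw [abs_le]
      constructor <;> linarith [(hlo i).1, (hlo i).2, (hlo j).1, (hlo j).2]
    calc y i ^ 2 = |y i| ^ 2 := (sq_abs _).symm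
      _ ≤ (R * ((1 - β) ^ k * (2 * eunorm x))) ^ 2 := pow_le_pow_left₀ (abs_nonneg _) h4 2
      _ = _ := by ring
  have h5 : y ⬝ᵥ y ≤ p * ((R * ((1 - β) ^ k * 2)) ^ 2 * eunorm x ^ 2) := by
    simp only [dotProduct, ← sq]
    simpa using Finset.sum_le_card_nsmul Finset.univ _ _ fun i _ => hyi i
  have h6 : x ⬝ᵥ x = eunorm x ^ 2 := by simp only [eunorm_sq, dotProduct, ← sq]
  rw [h6]
  nlinarith [sq_nonneg (eunorm x)]

lemma IsInterconnection.sum_row {Γ : Matrix (Fin p) (Fin p) ℝ} (hΓ : IsInterconnection Γ)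
    (i : Fin p) : ∑ j, Γ i j = 0 := by
  have h := hΓ.2 i
  rw [Finset.filter_ne'] at h
  rw [← Finset.add_sum_erase _ _ (Finset.mem_univ i), h]
  ring

/-- A nonnegative matrix with positive diagonal has a power with a positive column at every node
that is reachable from all others. -/
lemma exists_pow_column_pos {S : Matrix (Fin p) (Fin p) ℝ} (h0 : ∀ i j, 0 ≤ S i j)
    (hd : ∀ i, 0 < S i i) {v : Fin p}
    (hv : ∀ u, Relation.ReflTransGen (fun i j => 0 < S i j) u v) :
    ∃ k : ℕ, ∀ u, 0 < (S ^ k) u v := by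
  have hstep : ∀ (k : ℕ) i l, 0 < S i l → 0 < (S ^ k) l v → 0 < (S ^ (k + 1)) i v := by
    intro k i l h h'
    rw [pow_succ', Matrix.mul_apply]
    exact (mul_pos h h').trans_le (Finset.single_le_sum (f := fun l => S i l * (S ^ k) l v)
      (fun l _ => mul_nonneg (h0 i l) (pow_entry_nonneg h0 k l v)) (Finset.mem_univ l))
  have hex : ∀ u, ∃ k : ℕ, 0 < (S ^ k) u v := by
    intro u
    induction hv u using Relation.ReflTransGen.head_induction_on with
    | refl => exact ⟨0, by simp⟩
    | head h _ ih =>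
      obtain ⟨k, hk⟩ := ih
      exact ⟨k + 1, hstep k _ _ h hk⟩
  have hmono : ∀ u (k l : ℕ), k ≤ l → 0 < (S ^ k) u v → 0 < (S ^ l) u v := by
    intro u k l hkl hk
    induction l, hkl using Nat.le_induction with
    | base => exact hk
    | succ l _ ih => exact hstep l u u (hd u) ih
  choose k hk using hex
  exact ⟨∑ u, k u, fun u => hmono u (k u) _
    (Finset.single_le_sum (fun _ _ => Nat.zero_le _) (Finset.mem_univ u)) (hk u)⟩

/-- A quadratic Lyapunov function for a connected interconnection on the hyperplane orthogonal to
its left null vector. -/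
theorem exists_lyapunov {Γ : Matrix (Fin p) (Fin p) ℝ} (hΓ : IsInterconnection Γ)
    (hconn : ConnectedMat Γ) {r : Fin p → ℝ} (hr : r ᵥ* Γ = 0) (hr1 : ∑ i, r i = 1) :
    ∃ (P : Matrix (Fin p) (Fin p) ℝ) (c : ℝ), P.IsSymm ∧ 0 < c ∧
      (∀ y : Fin p → ℝ, r ⬝ᵥ y = 0 → y ⬝ᵥ y ≤ y ⬝ᵥ P *ᵥ y) ∧
      ∀ y : Fin p → ℝ, r ⬝ᵥ y = 0 → 2 * (y ⬝ᵥ (P * Γ) *ᵥ y) ≤ -c * (y ⬝ᵥ y) := by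
  obtain ⟨v, hv⟩ := hconn
  obtain ⟨h, hh, hdiag⟩ : ∃ h : ℝ, 0 < h ∧ ∀ i, 0 < 1 + h * Γ i i := by
    have hs : 0 ≤ ∑ i, |Γ i i| := by positivity
    refine ⟨(1 + ∑ i, |Γ i i|)⁻¹, by positivity, fun i => ?_⟩
    have h1 : |Γ i i| ≤ ∑ i, |Γ i i| :=
      Finset.single_le_sum (f := fun i => |Γ i i|) (fun _ _ => abs_nonneg _) (Finset.mem_univ i)
    have h2 := neg_abs_le (Γ i i)
    have h3 : 1 + (1 + ∑ i, |Γ i i|)⁻¹ * Γ i i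
        = (1 + ∑ i, |Γ i i|)⁻¹ * (1 + ∑ i, |Γ i i| + Γ i i) := by
      field_simp
    rw [h3]
    exact mul_pos (by positivity) (by linarith)
  set S : Matrix (Fin p) (Fin p) ℝ := 1 + h • Γ with hS
  have hSd : ∀ i, 0 < S i i := fun i => by simpa [hS] using hdiag i
  have hSo : ∀ i j, i ≠ j → S i j = h * Γ i j := fun i j hij => by simp [hS, hij]
  have hS0 : ∀ i j, 0 ≤ S i j := by
    intro i j
    by_cases hij : i = j
    · subst hij; exact (hSd i).le
    · rw [hSo i j hij]; exact mul_nonneg hh.le (hΓ.1 i j hij)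
  have hS1 : S *ᵥ 1 = 1 := by
    ext i
    rw [hS, Matrix.add_mulVec, Matrix.one_mulVec, Matrix.smul_mulVec]
    simp only [Pi.add_apply, Pi.smul_apply, Matrix.mulVec, dotProduct, Pi.one_apply, mul_one,
      hΓ.sum_row, smul_zero, add_zero]
  have hrS : r ᵥ* S = r := by
    simp [hS, Matrix.vecMul_add, Matrix.vecMul_smul, hr]
  obtain ⟨k, hk⟩ := exists_pow_column_pos hS0 hSd (v := v) fun u =>
    Relation.ReflTransGen.mono (fun i j hij => by
      by_cases hij' : i = j
      · subst hij'; exact hSd i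
      · rw [hSo i j hij']; exact mul_pos hh hij) _ _ (hv u)
  have hk1 : ∀ k : ℕ, (S ^ k) *ᵥ 1 = 1 := by
    intro k
    induction k with
    | zero => simp
    | succ k ih => rw [pow_succ, ← Matrix.mulVec_mulVec, hS1, ih]
  have hrow : ∀ i, ∑ j, (S ^ k) i j = 1 := by
    intro i
    have := congrFun (hk1 k) i
    simpa only [Matrix.mulVec, dotProduct, Pi.one_apply, mul_one] using this
  obtain ⟨u, -, hu⟩ := Finset.exists_min_image Finset.univ (fun u => (S ^ k) u v)
    ⟨v, Finset.mem_univ v⟩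
  obtain ⟨l, hl⟩ := exists_pow_mulVec_contract (pow_entry_nonneg hS0 k)
    hrow (hk u)
    (fun i => hu i (Finset.mem_univ i)) (vecMul_pow_eq_self hrS k) hr1
  rw [← pow_mul] at hl
  set N := k * l with hN
  have hquad : ∀ (X : Matrix (Fin p) (Fin p) ℝ) (a b : Fin p → ℝ),
      a ⬝ᵥ (Xᵀ * X) *ᵥ b = (X *ᵥ a) ⬝ᵥ (X *ᵥ b) := by
    intro X a b
    rw [← Matrix.mulVec_mulVec, Matrix.dotProduct_mulVec, Matrix.vecMul_transpose]
  refine ⟨∑ i ∈ Finset.range N, (S ^ i)ᵀ * S ^ i, 1 / (2 * h), ?_, by positivity, ?_, ?_⟩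
  · simp [Matrix.IsSymm, Matrix.transpose_sum]
  · intro y hy
    rw [Matrix.sum_mulVec, dotProduct_sum]
    simp only [hquad]
    rcases Nat.eq_zero_or_pos N with hN0 | hN0
    · have := hl y hy
      rw [hN0, pow_zero, Matrix.one_mulVec] at this
      rw [hN0, Finset.sum_range_zero]
      linarith
    · have := Finset.single_le_sum (f := fun i => (S ^ i *ᵥ y) ⬝ᵥ (S ^ i *ᵥ y))
        (fun i _ => by simp only [dotProduct, ← sq]; positivity) (Finset.mem_range.2 hN0)
      simpa using this
  · intro y hy
    have hstep : ∀ i : ℕ, 2 * h * (y ⬝ᵥ ((S ^ i)ᵀ * S ^ i) *ᵥ (Γ *ᵥ y)) ≤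
        (S ^ (i + 1) *ᵥ y) ⬝ᵥ (S ^ (i + 1) *ᵥ y) - (S ^ i *ᵥ y) ⬝ᵥ (S ^ i *ᵥ y) := by
      intro i
      have hsucc : S ^ (i + 1) *ᵥ y = S ^ i *ᵥ y + h • (S ^ i *ᵥ (Γ *ᵥ y)) := by
        rw [pow_succ, ← Matrix.mulVec_mulVec]
        conv_lhs => rw [hS, Matrix.add_mulVec, Matrix.one_mulVec, Matrix.smul_mulVec, ← hS]
        rw [Matrix.mulVec_add, Matrix.mulVec_smul]
      rw [hquad, hsucc]
      set a := S ^ i *ᵥ y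
      set b := S ^ i *ᵥ (Γ *ᵥ y)
      have hb : 0 ≤ b ⬝ᵥ b := by simp only [dotProduct, ← sq]; positivity
      simp only [add_dotProduct, dotProduct_add, smul_dotProduct, dotProduct_smul, smul_eq_mul,
        dotProduct_comm b a]
      nlinarith [mul_nonneg (mul_nonneg hh.le hh.le) hb]
    have hsum := Finset.sum_le_sum fun i (_ : i ∈ Finset.range N) => hstep i
    rw [Finset.sum_range_sub (fun i => (S ^ i *ᵥ y) ⬝ᵥ (S ^ i *ᵥ y)), ← Finset.mul_sum,
      ← dotProduct_sum, ← Matrix.sum_mulVec, Matrix.mulVec_mulVec, pow_zero,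
      Matrix.one_mulVec] at hsum
    have hle := hl y hy
    rw [neg_mul, one_div, ← div_eq_inv_mul, ← neg_div, le_div_iff₀ (by positivity)]
    linarith

end Interconnection

section TransitionMatrix

variable {n : ℕ}

lemma hasDerivAt_mul_entry {l m k : Type*} [Fintype m] {X : ℝ → Matrix l m ℝ}
    {Y : ℝ → Matrix m k ℝ} {X' : Matrix l m ℝ} {Y' : Matrix m k ℝ} {t : ℝ}
    (hX : ∀ a b, HasDerivAt (fun s => X s a b) (X' a b) t)
    (hY : ∀ a b, HasDerivAt (fun s => Y s a b) (Y' a b) t) (a : l) (b : k) :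
    HasDerivAt (fun s => (X s * Y s) a b) ((X' * Y t + X t * Y') a b) t := by
  simp only [Matrix.mul_apply, Matrix.add_apply, ← Finset.sum_add_distrib]
  exact HasDerivAt.fun_sum fun j _ => (hX a j).mul (hY j b)

section

attribute [local instance] Matrix.linftyOpNormedRing Matrix.linftyOpNormedAlgebra

lemma hasDerivAt_inv_entry {U : ℝ → Matrix (Fin n) (Fin n) ℝ} {A : Matrix (Fin n) (Fin n) ℝ}
    {t : ℝ} (hU : ∀ a b, HasDerivAt (fun s => U s a b) ((A * U t) a b) t)
    (hu : (U t).det ≠ 0) (a b : Fin n) :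
    HasDerivAt (fun s => (U s)⁻¹ a b) ((-((U t)⁻¹ * A)) a b) t := by
  have hunit : IsUnit (U t) := (Matrix.isUnit_iff_isUnit_det _).2 hu.isUnit
  obtain ⟨u, hu'⟩ := hunit
  have hUm : HasDerivAt U (A * U t) t :=
    hasDerivAt_pi.2 fun a => hasDerivAt_pi.2 fun b => hU a b
  have hF := hasFDerivAt_ringInverse (𝕜 := ℝ) u
  rw [hu'] at hF
  have hD := hF.comp_hasDerivAt t hUm
  have hval : (-ContinuousLinearMap.mulLeftRight ℝ (Matrix (Fin n) (Fin n) ℝ) ↑u⁻¹ ↑u⁻¹)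
      (A * U t) = -((U t)⁻¹ * A) := by
    have h1 : (↑u⁻¹ : Matrix (Fin n) (Fin n) ℝ) = (U t)⁻¹ := by
      rw [← hu', Matrix.coe_units_inv]
    rw [h1]
    change -((U t)⁻¹ * (A * U t) * (U t)⁻¹) = _
    rw [mul_assoc, mul_assoc, Matrix.mul_nonsing_inv _ hu.isUnit, mul_one]
  rw [hval] at hD
  have := hasDerivAt_pi.1 (hasDerivAt_pi.1 hD a) b
  simpa only [Function.comp_def, ← Matrix.nonsing_inv_eq_ringInverse] using this

end

lemma continuous_det_of_entries {U : ℝ → Matrix (Fin n) (Fin n) ℝ}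
    (hU : ∀ a b, Continuous fun s => U s a b) : Continuous fun s => (U s).det :=
  (continuous_matrix hU).matrix_det

/-- The state transition matrix is invertible. -/
theorem det_transition_ne_zero {A : ℝ → Matrix (Fin n) (Fin n) ℝ}
    {Φ : ℝ → ℝ → Matrix (Fin n) (Fin n) ℝ} (hΦ0 : ∀ t₀ : ℝ, Φ t₀ t₀ = 1)
    (hΦ : ∀ t₀ t : ℝ, ∀ a b : Fin n,
      HasDerivAt (fun s => Φ s t₀ a b) ((A t * Φ t t₀) a b) t) (t₀ t : ℝ) :
    (Φ t t₀).det ≠ 0 := by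
  have hcont : ∀ t₀, Continuous fun s => (Φ s t₀).det := fun t₀ =>
    continuous_det_of_entries fun a b =>
      continuous_iff_continuousAt.2 fun s => (hΦ t₀ s a b).continuousAt
  have hopen : IsOpen {s | (Φ s t₀).det = 0} := by
    refine Metric.isOpen_iff.2 fun s₁ hs₁ => ?_
    have hne : {s | (Φ s s₁).det ≠ 0} ∈ nhds s₁ :=
      (hcont s₁).continuousAt.eventually_ne (by simp [hΦ0])
    obtain ⟨ε, hε, hball⟩ := Metric.mem_nhds_iff.1 hne
    refine ⟨ε, hε, fun s hs => ?_⟩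
    have hconst : (Φ s s₁)⁻¹ * Φ s t₀ = Φ s₁ t₀ := by
      ext a b
      have hd : ∀ τ ∈ Metric.ball s₁ ε,
          HasDerivAt (fun σ => ((Φ σ s₁)⁻¹ * Φ σ t₀) a b) 0 τ := by
        intro τ hτ
        have := hasDerivAt_mul_entry (hasDerivAt_inv_entry (hΦ s₁ τ) (hball hτ)) (hΦ t₀ τ) a b
        simpa [mul_assoc] using this
      have := Metric.isOpen_ball.is_const_of_deriv_eq_zero
        (convex_ball s₁ ε).isPreconnected
        (fun τ hτ => (hd τ hτ).differentiableAt.differentiableWithinAt)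
        (fun τ hτ => (hd τ hτ).deriv) hs (Metric.mem_ball_self hε)
      simpa [hΦ0] using this
    have hdet := congrArg Matrix.det hconst
    rw [Matrix.det_mul, show (Φ s₁ t₀).det = 0 from hs₁, mul_eq_zero] at hdet
    refine hdet.resolve_left ?_
    exact ((Matrix.isUnit_nonsing_inv_det_iff).2 (isUnit_iff_ne_zero.2 (hball hs))).ne_zero
  have hclosed : IsClosed {s | (Φ s t₀).det = 0} := isClosed_eq (hcont t₀) continuous_const
  rcases isClopen_iff.1 ⟨hclosed, hopen⟩ with h | h
  · exact fun ht => (h ▸ (show t ∈ {s | (Φ s t₀).det = 0} from ht) : t ∈ (∅ : Set ℝ))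
  · have : t₀ ∈ {s | (Φ s t₀).det = 0} := h ▸ Set.mem_univ t₀
    simp [hΦ0] at this

end TransitionMatrix

section Excitation

variable {n m p : ℕ}

lemma trace_transpose_mul_mul {ι κ : Type*} [Fintype ι] [Fintype κ] (M : Matrix ι ι ℝ)
    (Y : Matrix ι κ ℝ) : (Yᵀ * M * Y).trace = ∑ j, Yᵀ j ⬝ᵥ M *ᵥ Yᵀ j := by
  refine Finset.sum_congr rfl fun j _ => ?_
  rw [Matrix.diag_apply, Matrix.mul_assoc, Matrix.mul_apply']
  rfl

lemma frobSq_eq_sum_dotProduct {ι κ : Type*} [Fintype ι] [Fintype κ] (Y : Matrix ι κ ℝ) :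
    frobSq Y = ∑ j, Yᵀ j ⬝ᵥ Yᵀ j := by
  rw [← frobSq_transpose]
  simp only [frobSq, dotProduct, sq]

lemma frobSq_mul_transpose_eq (W : Matrix (Fin p) (Fin n) ℝ) (B : Matrix (Fin m) (Fin n) ℝ) :
    frobSq (W * Bᵀ) = ∑ i, W i ⬝ᵥ (Bᵀ * B) *ᵥ W i := by
  rw [← frobSq_transpose, ← trace_transpose_mul_self, Matrix.transpose_mul,
    Matrix.transpose_transpose, Matrix.transpose_mul, Matrix.mul_assoc Wᵀᵀ, ← Matrix.mul_assoc Bᵀ,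
    ← Matrix.mul_assoc, trace_transpose_mul_mul]
  rfl

lemma intervalIntegrable_fun_sum {ι : Type*} (A : Finset ι) {f : ι → ℝ → ℝ} {s u : ℝ}
    (h : ∀ i ∈ A, IntervalIntegrable (f i) volume s u) :
    IntervalIntegrable (fun t => ∑ i ∈ A, f i t) volume s u := by
  have := IntervalIntegrable.sum A h
  rwa [Finset.sum_fn] at this

lemma dotProduct_mulVec_eq_sum (M : Matrix (Fin n) (Fin n) ℝ) (v : Fin n → ℝ) :
    v ⬝ᵥ M *ᵥ v = ∑ a, ∑ b, v a * v b * M a b := by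
  simp only [dotProduct, Matrix.mulVec, Finset.mul_sum]
  exact Finset.sum_congr rfl fun a _ => Finset.sum_congr rfl fun b _ => by ring

lemma intervalIntegrable_quadForm {Q : ℝ → Matrix (Fin n) (Fin n) ℝ} {s u : ℝ}
    (hQ : ∀ a b, IntervalIntegrable (fun t => Q t a b) volume s u) (v : Fin n → ℝ) :
    IntervalIntegrable (fun t => v ⬝ᵥ Q t *ᵥ v) volume s u := by
  simp only [dotProduct_mulVec_eq_sum]
  exact intervalIntegrable_fun_sum _ fun a _ => intervalIntegrable_fun_sum _ fun b _ =>
    (hQ a b).const_mul _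

lemma integral_quadForm {Q : ℝ → Matrix (Fin n) (Fin n) ℝ} {s u : ℝ}
    (hQ : ∀ a b, IntervalIntegrable (fun t => Q t a b) volume s u) (v : Fin n → ℝ) :
    ∫ t in s..u, v ⬝ᵥ Q t *ᵥ v = v ⬝ᵥ (Matrix.of fun a b => ∫ t in s..u, Q t a b) *ᵥ v := by
  simp only [dotProduct_mulVec_eq_sum, Matrix.of_apply]
  rw [intervalIntegral.integral_finsetSum fun a _ =>
    intervalIntegrable_fun_sum _ fun b _ => (hQ a b).const_mul _]
  refine Finset.sum_congr rfl fun a _ => ?_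
  rw [intervalIntegral.integral_finsetSum fun b _ => (hQ a b).const_mul _]
  simp only [intervalIntegral.integral_const_mul]

lemma posSemidef_integral_gram {B : ℝ → Matrix (Fin m) (Fin n) ℝ} {s u : ℝ} (hsu : s ≤ u)
    (hQ : ∀ a b, IntervalIntegrable (fun t => ((B t)ᵀ * B t) a b) volume s u) :
    (Matrix.of fun a b => ∫ t in s..u, ((B t)ᵀ * B t) a b).PosSemidef := by
  refine Matrix.PosSemidef.of_dotProduct_mulVec_nonneg ?_ fun v => ?_
  · ext a b
    simp only [Matrix.conjTranspose_apply, Matrix.of_apply, star_trivial, Matrix.mul_apply,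
      Matrix.transpose_apply, mul_comm]
  · rw [star_trivial, ← integral_quadForm hQ]
    refine intervalIntegral.integral_nonneg hsu fun t _ => ?_
    rw [← Matrix.mulVec_mulVec, Matrix.dotProduct_mulVec, Matrix.vecMul_transpose]
    simp only [dotProduct, ← sq]
    positivity

/-- Excitation levels are at most proportional to the length of the window. -/
lemma le_mul_of_le_sigmaMin_gram (hn : 0 < n) {B : ℝ → Matrix (Fin m) (Fin n) ℝ} {b s T ε : ℝ}
    (hT : 0 ≤ T) (hB : ∀ t ∈ Set.Icc s (s + T), frobSq (B t) ≤ b)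
    (hQ : ∀ a b, IntervalIntegrable (fun t => ((B t)ᵀ * B t) a b) volume s (s + T))
    (hε : ε ≤ sigmaMin (Matrix.of fun a b => ∫ t in s..(s + T), ((B t)ᵀ * B t) a b)) :
    ε ≤ b * T := by
  have hsT : s ≤ s + T := by linarith
  have h1 := le_quadForm_of_le_sigmaMin (posSemidef_integral_gram hsT hQ) hε
    (Pi.single ⟨0, hn⟩ 1)
  simp only [single_dotProduct, Pi.single_eq_same, mul_one, one_mul, Matrix.mulVec_single_one,
    Matrix.col_apply, Matrix.of_apply] at h1
  refine h1.trans ?_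
  have h2 : ∫ t in s..(s + T), ((B t)ᵀ * B t) ⟨0, hn⟩ ⟨0, hn⟩ ≤ ∫ _ in s..(s + T), b := by
    refine intervalIntegral.integral_mono_on hsT (hQ _ _) intervalIntegrable_const
      fun t ht => le_trans ?_ (hB t ht)
    rw [← frobSq_transpose]
    simp only [Matrix.mul_apply, Matrix.transpose_apply, ← sq]
    exact Finset.single_le_sum (f := fun a => ∑ j, (B t)ᵀ a j ^ 2)
      (fun _ _ => Finset.sum_nonneg fun _ _ => sq_nonneg _) (Finset.mem_univ _)
  rw [intervalIntegral.integral_const, smul_eq_mul] at h2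
  linarith

lemma deltaCT_le {ε T q : ℝ} (hε : 0 < ε) (hT : 0 < T) (hq : ε ≤ q * T) :
    deltaCT ε T ≤ (1 + q ^ 2) * (ε / (1 + T ^ 2)) := by
  have hpos : 0 < 1 + T ^ 2 := by positivity
  rw [← mul_div_assoc, le_div_iff₀ hpos]
  rcases le_total T 1 with h | h
  · calc deltaCT ε T * (1 + T ^ 2) ≤ ε / 2 * (1 + T ^ 2) :=
          mul_le_mul_of_nonneg_right (min_le_left _ _) hpos.le
      _ ≤ ε / 2 * 2 := by gcongr; nlinarith
      _ ≤ (1 + q ^ 2) * ε := by nlinarith [mul_nonneg (sq_nonneg q) hε.le]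
  · have h1 : ε ^ 2 ≤ (q * T) ^ 2 := pow_le_pow_left₀ hε.le hq 2
    have h2 : 1 + T ^ 2 ≤ 2 * T ^ 3 := by nlinarith [mul_le_mul_of_nonneg_left h (sq_nonneg T)]
    calc deltaCT ε T * (1 + T ^ 2) ≤ ε ^ 3 / (240 * T ^ 5) * (1 + T ^ 2) :=
          mul_le_mul_of_nonneg_right (min_le_right _ _) hpos.le
      _ ≤ ε ^ 3 / (240 * T ^ 5) * (2 * T ^ 3) := by gcongr
      _ = ε * ε ^ 2 / (120 * T ^ 2) := by field_simp; ring
      _ ≤ ε * (q * T) ^ 2 / (120 * T ^ 2) := by gcongr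
      _ = ε * q ^ 2 / 120 := by field_simp
      _ ≤ (1 + q ^ 2) * ε := by nlinarith [mul_nonneg (sq_nonneg q) hε.le]

/-- Decrease of the Lyapunov function over one excitation window. -/
lemma mul_frobSq_le_decrement {G : Matrix (Fin p) (Fin p) ℝ} {B : ℝ → Matrix (Fin m) (Fin n) ℝ}
    {W : ℝ → Matrix (Fin p) (Fin n) ℝ} {V V' : ℝ → ℝ} {b c : ℝ} (hc : 0 < c)
    (hB : ∀ t, 0 ≤ t → frobSq (B t) ≤ b)
    (hQ : ∀ a b, ∀ s u : ℝ, IntervalIntegrable (fun t => ((B t)ᵀ * B t) a b) volume s u)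
    (hW : ∀ t, 0 ≤ t → ∀ i a,
      HasDerivAt (fun s => W s i a) ((G * W t * ((B t)ᵀ * B t)) i a) t)
    (hV : ∀ t, 0 ≤ t → HasDerivAt V (V' t) t)
    (hV' : ∀ t, 0 ≤ t → V' t ≤ -c * frobSq (W t * (B t)ᵀ))
    {s T ε : ℝ} (hs : 0 ≤ s) (hT : 0 ≤ T)
    (hε : ε ≤ sigmaMin (Matrix.of fun a b => ∫ t in s..(s + T), ((B t)ᵀ * B t) a b)) :
    ε * frobSq (W s) ≤
      2 / c * (1 + p * n * frobSq G * b ^ 2) * (1 + T ^ 2) * (V s - V (s + T)) := by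
  have hsT : s ≤ s + T := by linarith
  have hb : 0 ≤ b := (frobSq_nonneg _).trans (hB 0 le_rfl)
  have hG := frobSq_nonneg G
  have hanti : AntitoneOn V (Set.Ici 0) := by
    refine antitoneOn_of_hasDerivWithinAt_nonpos (convex_Ici 0)
      (fun t ht => (hV t ht).continuousAt.continuousWithinAt)
      (fun t ht => (hV t (interior_subset ht)).hasDerivWithinAt) fun t ht => ?_
    nlinarith [hV' t (interior_subset ht), mul_nonneg hc.le (frobSq_nonneg (W t * (B t)ᵀ))]
  set D := V s - V (s + T) with hD
  have hD0 : 0 ≤ D := sub_nonneg.2 (hanti hs (hs.trans hsT) hsT)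
  set K := frobSq G * b / c with hK
  have hK0 : 0 ≤ K := by positivity
  have hinc : ∀ t ∈ Set.Icc s (s + T), ∀ i a, (W t i a - W s i a) ^ 2 ≤ T * (K * D) := by
    intro t ht i a
    have h0t : 0 ≤ t := hs.trans ht.1
    have h := sq_sub_le_of_sq_deriv_le (g := fun τ => -K * V τ) (g' := fun τ => -K * V' τ) ht.1
      (fun τ hτ => hW τ (hs.trans hτ.1) i a)
      (fun τ hτ => (hV τ (hs.trans hτ.1)).const_mul _) fun τ hτ => by
        have h0 : 0 ≤ τ := hs.trans hτ.1
        have hf := frobSq_nonneg (W τ * (B τ)ᵀ)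
        calc ((G * W τ * ((B τ)ᵀ * B τ)) i a) ^ 2
            ≤ frobSq (G * W τ * ((B τ)ᵀ * B τ)) := sq_entry_le_frobSq _ _ _
          _ = frobSq (G * (W τ * (B τ)ᵀ) * B τ) := by simp only [Matrix.mul_assoc]
          _ ≤ frobSq G * frobSq (W τ * (B τ)ᵀ) * b :=
            (frobSq_mul_le _ _).trans (mul_le_mul (frobSq_mul_le _ _) (hB τ h0)
              (frobSq_nonneg _) (mul_nonneg hG hf))
          _ = K * (c * frobSq (W τ * (B τ)ᵀ)) := by rw [hK]; field_simp
          _ ≤ -K * V' τ := by nlinarith [mul_le_mul_of_nonneg_left (hV' τ h0) hK0]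
    have hVt : V (s + T) ≤ V t := hanti h0t (h0t.trans ht.2) ht.2
    have hVs : V t ≤ V s := hanti hs h0t ht.1
    calc (W t i a - W s i a) ^ 2 ≤ (t - s) * (-K * V t - -K * V s) := h
      _ = (t - s) * (K * (V s - V t)) := by ring
      _ ≤ T * (K * D) := by
        refine mul_le_mul (by linarith [ht.2]) (mul_le_mul_of_nonneg_left (by linarith) hK0)
          (mul_nonneg hK0 (by linarith)) hT
  set H := 2 * (p * n * (T * (K * D)) * b) with hH
  have hpt : ∀ t ∈ Set.Icc s (s + T),
      frobSq (W s * (B t)ᵀ) - H ≤ 2 * frobSq (W t * (B t)ᵀ) := by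
    intro t ht
    have h1 : frobSq (W s - W t) ≤ p * n * (T * (K * D)) := by
      have : ∀ i ∈ (Finset.univ : Finset (Fin p)),
          ∑ a, (W s - W t) i a ^ 2 ≤ n * (T * (K * D)) := by
        intro i _
        have := Finset.sum_le_card_nsmul (Finset.univ : Finset (Fin n))
          (fun a => (W s - W t) i a ^ 2) (T * (K * D)) fun a _ => by
            have := hinc t ht i a
            rw [Matrix.sub_apply]
            linarith [sub_sq_comm (W s i a) (W t i a)]
        simpa using this
      have := Finset.sum_le_card_nsmul _ _ _ this
      rw [Finset.card_univ, Fintype.card_fin, nsmul_eq_mul, ← mul_assoc] at this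
      exact this
    have h2 : frobSq ((W s - W t) * (B t)ᵀ) ≤ p * n * (T * (K * D)) * b := by
      refine (frobSq_mul_le _ _).trans ?_
      rw [frobSq_transpose]
      exact mul_le_mul h1 (hB t (hs.trans ht.1)) (frobSq_nonneg _) (by positivity)
    have h3 := frobSq_add_le (W t * (B t)ᵀ) ((W s - W t) * (B t)ᵀ)
    rw [← Matrix.add_mul, add_sub_cancel] at h3
    linarith
  have hform : ∀ i, IntervalIntegrable (fun t => W s i ⬝ᵥ ((B t)ᵀ * B t) *ᵥ W s i) volume s
      (s + T) := fun i => intervalIntegrable_quadForm (fun a b => hQ a b _ _) _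
  have hsumform : IntervalIntegrable
      (fun t => ∑ i, W s i ⬝ᵥ ((B t)ᵀ * B t) *ᵥ W s i) volume s (s + T) :=
    intervalIntegrable_fun_sum _ fun i _ => hform i
  have hint : IntervalIntegrable (fun t => frobSq (W s * (B t)ᵀ) - H) volume s (s + T) := by
    simp only [frobSq_mul_transpose_eq]
    exact hsumform.sub intervalIntegrable_const
  have hupper := intervalIntegral.integral_le_sub_of_hasDeriv_right_of_le
    (g := fun t => -(2 / c) * V t) (g' := fun t => -(2 / c) * V' t) hsT
    (fun t ht => ((hV t (hs.trans ht.1)).continuousAt.const_mul _).continuousWithinAt)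
    (fun t ht => ((hV t (hs.trans ht.1.le)).const_mul _).hasDerivWithinAt)
    ((intervalIntegrable_iff_integrableOn_Icc_of_le hsT).1 hint)
    fun t ht => (hpt t (Set.Ioo_subset_Icc_self ht)).trans (by
      have h1 := hV' t (hs.trans ht.1.le)
      have h2 : 2 * frobSq (W t * (B t)ᵀ) = 2 / c * (c * frobSq (W t * (B t)ᵀ)) := by
        field_simp
      rw [h2]
      nlinarith [mul_le_mul_of_nonneg_left h1 (show 0 ≤ 2 / c by positivity)])
  have hlower : ε * frobSq (W s) - T * H ≤
      ∫ t in s..(s + T), (frobSq (W s * (B t)ᵀ) - H) := by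
    simp only [frobSq_mul_transpose_eq]
    rw [intervalIntegral.integral_sub hsumform intervalIntegrable_const,
      intervalIntegral.integral_finsetSum fun i _ => hform i, intervalIntegral.integral_const,
      smul_eq_mul, add_sub_cancel_left]
    refine sub_le_sub_right ?_ _
    rw [← frobSq_transpose, frobSq_eq_sum_dotProduct, Finset.mul_sum]
    refine Finset.sum_le_sum fun i _ => ?_
    rw [integral_quadForm fun a b => hQ a b _ _]
    exact le_quadForm_of_le_sigmaMin (posSemidef_integral_gram hsT fun a b => hQ a b _ _) hε _
  have hfin : ε * frobSq (W s) ≤ 2 / c * D + T * H := by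
    rw [hD]
    linarith
  have hHeq : T * H = 2 / c * (p * n * frobSq G * b ^ 2) * T ^ 2 * D := by
    rw [hH, hK]; field_simp
  refine hfin.trans ?_
  rw [hHeq]
  have hpn : 0 ≤ p * n * frobSq G * b ^ 2 := by positivity
  have : 2 / c * (1 + p * n * frobSq G * b ^ 2) * (1 + T ^ 2) * D
      = 2 / c * D + 2 / c * (p * n * frobSq G * b ^ 2) * T ^ 2 * D
        + 2 / c * D * (p * n * frobSq G * b ^ 2 + T ^ 2) := by ring
  rw [this]
  have : 0 ≤ 2 / c * D * (p * n * frobSq G * b ^ 2 + T ^ 2) := by positivity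
  linarith

end Excitation

section Convergence

variable {n m p : ℕ}

lemma hasDerivAt_quadratic_trace {P : Matrix (Fin p) (Fin p) ℝ} (hP : P.IsSymm)
    {W : ℝ → Matrix (Fin p) (Fin n) ℝ} {W' : Matrix (Fin p) (Fin n) ℝ} {t : ℝ}
    (hW : ∀ i a, HasDerivAt (fun s => W s i a) (W' i a) t) :
    HasDerivAt (fun s => ((W s)ᵀ * P * W s).trace) (2 * ((W t)ᵀ * P * W').trace) t := by
  have h1 := hasDerivAt_mul_entry (X := fun s => (W s)ᵀ) (X' := W'ᵀ) (Y := fun _ => P)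
    (Y' := (0 : Matrix (Fin p) (Fin p) ℝ)) (fun a i => hW i a) fun i j => hasDerivAt_const t (P i j)
  have h2 : HasDerivAt (fun s => ((W s)ᵀ * P * W s).trace)
      ((W'ᵀ * P + (W t)ᵀ * (0 : Matrix (Fin p) (Fin p) ℝ)) * W t + (W t)ᵀ * P * W').trace t := by
    simp only [Matrix.trace, Matrix.diag_apply]
    exact HasDerivAt.fun_sum fun a _ => hasDerivAt_mul_entry h1 hW a a
  convert h2 using 1
  have h3 : (W'ᵀ * P * W t).trace = ((W t)ᵀ * P * W').trace := by
    rw [← Matrix.trace_transpose, Matrix.transpose_mul, Matrix.transpose_mul,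
      Matrix.transpose_transpose, hP.eq, Matrix.mul_assoc]
  rw [Matrix.mul_zero, add_zero, Matrix.trace_add, h3]
  ring

/-- Disagreement of the array decays to zero under sufficient excitation. -/
theorem tendsto_frobSq_of_suffExciting {Γ : Matrix (Fin p) (Fin p) ℝ}
    (hΓ : IsInterconnection Γ) (hconn : ConnectedMat Γ) {r : Fin p → ℝ} (hr : r ᵥ* Γ = 0)
    (hr1 : ∑ i, r i = 1) {B : ℝ → Matrix (Fin m) (Fin n) ℝ} {b : ℝ}
    (hB : ∀ t, 0 ≤ t → frobSq (B t) ≤ b)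
    (hQ : ∀ a b, ∀ s u : ℝ, IntervalIntegrable (fun t => ((B t)ᵀ * B t) a b) volume s u)
    (hexc : SuffExcitingCT fun t => (B t)ᵀ * B t)
    {W : ℝ → Matrix (Fin p) (Fin n) ℝ}
    (hW : ∀ t, 0 ≤ t → ∀ i a,
      HasDerivAt (fun s => W s i a) ((Γ * W t * ((B t)ᵀ * B t)) i a) t)
    (hrW : ∀ t, 0 ≤ t → r ᵥ* W t = 0) :
    Tendsto (fun t => frobSq (W t)) atTop (nhds 0) := by
  rcases Nat.eq_zero_or_pos n with rfl | hn
  · simp [frobSq]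
  obtain ⟨P, c, hP, hc, hPlow, hPΓ⟩ := exists_lyapunov hΓ hconn hr hr1
  have hb : 0 ≤ b := (frobSq_nonneg _).trans (hB 0 le_rfl)
  set V : ℝ → ℝ := fun t => ((W t)ᵀ * P * W t).trace with hVdef
  have hV : ∀ t, 0 ≤ t →
      HasDerivAt V (2 * ((W t)ᵀ * P * (Γ * W t * ((B t)ᵀ * B t))).trace) t := fun t ht =>
    hasDerivAt_quadratic_trace hP (hW t ht)
  have hV' : ∀ t, 0 ≤ t → 2 * ((W t)ᵀ * P * (Γ * W t * ((B t)ᵀ * B t))).trace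
      ≤ -c * frobSq (W t * (B t)ᵀ) := by
    intro t ht
    have h1 : ((W t)ᵀ * P * (Γ * W t * ((B t)ᵀ * B t))).trace
        = ((W t * (B t)ᵀ)ᵀ * (P * Γ) * (W t * (B t)ᵀ)).trace := by
      rw [Matrix.transpose_mul, Matrix.transpose_transpose]
      have h2 := Matrix.trace_mul_comm ((W t)ᵀ * P * Γ * W t * (B t)ᵀ) (B t)
      simpa only [Matrix.mul_assoc] using h2
    rw [h1, trace_transpose_mul_mul, frobSq_eq_sum_dotProduct, Finset.mul_sum, Finset.mul_sum]
    refine Finset.sum_le_sum fun j _ => hPΓ _ ?_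
    have h3 : r ᵥ* (W t * (B t)ᵀ) = 0 := by
      rw [← Matrix.vecMul_vecMul, hrW t ht, Matrix.zero_vecMul]
    exact congrFun h3 j
  have hVlow : ∀ t, 0 ≤ t → frobSq (W t) ≤ V t := by
    intro t ht
    rw [hVdef]
    simp only
    rw [trace_transpose_mul_mul, frobSq_eq_sum_dotProduct]
    exact Finset.sum_le_sum fun j _ => hPlow _ (congrFun (hrW t ht) j)
  set κ := (1 + frobSq P) / 2 with hκ
  have hκ0 : 0 < κ := by have := frobSq_nonneg P; positivity
  have hVup : ∀ t, V t ≤ κ * frobSq (W t) := by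
    intro t
    have h1 := trace_transpose_mul_le (W t) (P * W t)
    have h2 := frobSq_mul_le P (W t)
    rw [← Matrix.mul_assoc] at h1
    calc V t ≤ _ := h1
      _ ≤ (frobSq (W t) + frobSq P * frobSq (W t)) / 2 := by linarith
      _ = κ * frobSq (W t) := by rw [hκ]; ring
  have hanti : AntitoneOn V (Set.Ici 0) := by
    refine antitoneOn_of_hasDerivWithinAt_nonpos (convex_Ici 0)
      (fun t ht => (hV t ht).continuousAt.continuousWithinAt)
      (fun t ht => (hV t (interior_subset ht)).hasDerivWithinAt) fun t ht => ?_
    nlinarith [hV' t (interior_subset ht), mul_nonneg hc.le (frobSq_nonneg (W t * (B t)ᵀ))]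
  obtain ⟨ε, T, hε, hT, hσ, hdiv⟩ := hexc
  set τ : ℕ → ℝ := fun i => ∑ j ∈ Finset.range i, T j with hτ
  have hτ0 : ∀ i, 0 ≤ τ i := fun i => Finset.sum_nonneg fun j _ => (hT j).le
  have hτs : ∀ i, τ (i + 1) = τ i + T i := fun i => Finset.sum_range_succ _ _
  set K := 2 / c * (1 + p * n * frobSq Γ * b ^ 2) with hK
  have hK0 : 0 < K := by have := frobSq_nonneg Γ; positivity
  have hdec : ∀ i, (K * κ)⁻¹ * (ε i / (1 + T i ^ 2)) * V (τ i) ≤ V (τ i) - V (τ (i + 1)) := by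
    intro i
    have h1 := mul_frobSq_le_decrement hc hB hQ hW hV hV' (hτ0 i) (hT i).le (hσ i)
    rw [← hτs, ← hK] at h1
    have hT2 : 0 < 1 + T i ^ 2 := by positivity
    have h2 : ε i * V (τ i) ≤ K * κ * (1 + T i ^ 2) * (V (τ i) - V (τ (i + 1))) := by
      calc ε i * V (τ i) ≤ ε i * (κ * frobSq (W (τ i))) :=
            mul_le_mul_of_nonneg_left (hVup _) (hε i).le
        _ = κ * (ε i * frobSq (W (τ i))) := by ring
        _ ≤ κ * (K * (1 + T i ^ 2) * (V (τ i) - V (τ (i + 1)))) :=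
            mul_le_mul_of_nonneg_left h1 hκ0.le
        _ = _ := by ring
    have h3 : (K * κ)⁻¹ * (ε i / (1 + T i ^ 2)) * V (τ i)
        = ε i * V (τ i) / (K * κ * (1 + T i ^ 2)) := by field_simp
    rw [h3, div_le_iff₀ (by positivity), mul_comm (V (τ i) - _)]
    exact h2
  have hsum : Tendsto (fun N => ∑ i ∈ Finset.range N, (K * κ)⁻¹ * (ε i / (1 + T i ^ 2)))
      atTop atTop := by
    have hscale : 0 < (K * κ)⁻¹ * (1 + b ^ 2)⁻¹ := by positivity
    refine tendsto_atTop_mono (fun N => ?_) (hdiv.const_mul_atTop hscale)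
    rw [Finset.mul_sum]
    refine Finset.sum_le_sum fun i _ => ?_
    have hq := le_mul_of_le_sigmaMin_gram hn (hT i).le
      (fun t ht => hB t ((hτ0 i).trans ht.1)) (fun a b => hQ a b _ _) (hσ i)
    rw [mul_assoc]
    refine mul_le_mul_of_nonneg_left ?_ (by positivity)
    rw [inv_mul_le_iff₀ (by positivity)]
    exact deltaCT_le (hε i) (hT i) hq
  have hlim : Tendsto (fun i => V (τ i)) atTop (nhds 0) :=
    tendsto_zero_of_relative_decrement
      (fun i => (frobSq_nonneg _).trans (hVlow _ (hτ0 i)))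
      (fun i => by have := hε i; positivity) hdec hsum
  refine Metric.tendsto_atTop.2 fun η hη => ?_
  obtain ⟨i, hi⟩ := (hlim.eventually_lt_const hη).exists
  refine ⟨τ i, fun t ht => ?_⟩
  have h0t : 0 ≤ t := (hτ0 i).trans ht
  rw [Real.dist_eq, sub_zero, abs_of_nonneg (frobSq_nonneg _)]
  exact ((hVlow t h0t).trans (hanti (hτ0 i) h0t ht)).trans_lt hi

end Convergence

theorem stmt10 {n m p : ℕ}
    (A : ℝ → Matrix (Fin n) (Fin n) ℝ) (C : ℝ → Matrix (Fin m) (Fin n) ℝ)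
    (Φ : ℝ → ℝ → Matrix (Fin n) (Fin n) ℝ)
    -- Φ is the state transition matrix of ẋ = A(t)x
    (hΦ0 : ∀ t₀ : ℝ, Φ t₀ t₀ = 1)
    (hΦ : ∀ t₀ t : ℝ, ∀ a b : Fin n,
      HasDerivAt (fun s => Φ s t₀ a b) ((A t * Φ t t₀) a b) t)
    -- Assumption 1 (boundedness)
    (abar : ℝ) (habar : 1 ≤ abar)
    (hΦbdd : ∀ t₁ t₂ : ℝ, 0 ≤ t₁ → 0 ≤ t₂ → specNorm (Φ t₁ t₂) ≤ abar)
    (cbar : ℝ) (hcbar : 1 ≤ cbar)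
    (hCbdd : ∀ t : ℝ, 0 ≤ t → specNorm (C t) ≤ cbar)
    -- integrability of the grammian integrand
    (hint : ∀ a b : Fin n, ∀ s u : ℝ,
      IntervalIntegrable (fun t => ((Φ t 0)ᵀ * (C t)ᵀ * C t * Φ t 0) a b) volume s u)
    -- asymptotic observability: the grammian integrand is sufficiently exciting
    (hobs : SuffExcitingCT (fun t => (Φ t 0)ᵀ * (C t)ᵀ * C t * Φ t 0))
    -- the feedback law
    (L : ℝ → Matrix (Fin n) (Fin m) ℝ)
    (hL : ∀ t, L t = Φ t 0 * (Φ t 0)ᵀ * (C t)ᵀ)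
    -- connected interconnection
    (Γ : Matrix (Fin p) (Fin p) ℝ)
    (hΓ : IsInterconnection Γ) (hconn : ConnectedMat Γ)
    (r : Fin p → ℝ) (hr1 : Matrix.vecMul r Γ = 0) (hr2 : ∑ i, r i = 1)
    -- solutions of the coupled array
    (x : Fin p → ℝ → Fin n → ℝ)
    (hx : ∀ i, ∀ t : ℝ, 0 ≤ t → ∀ a : Fin n,
      HasDerivAt (fun s => x i s a)
        (((A t).mulVec (x i t)
          + (L t * C t).mulVec
              (∑ j ∈ Finset.univ.filter (fun j => j ≠ i), Γ i j • (x j t - x i t))) a) t)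
    (xbar : ℝ → Fin n → ℝ)
    (hxbar : ∀ t, xbar t = (Φ t 0).mulVec (∑ j, r j • x j 0)) :
    ∀ i, Tendsto (fun t => eunorm (x i t - xbar t)) atTop (nhds 0) := by
  set B : ℝ → Matrix (Fin m) (Fin n) ℝ := fun t => C t * Φ t 0 with hBdef
  have hgram : ∀ t, (Φ t 0)ᵀ * (C t)ᵀ * C t * Φ t 0 = (B t)ᵀ * B t := fun t => by
    simp only [hBdef, Matrix.transpose_mul, Matrix.mul_assoc]
  have hΦfrob : ∀ t, 0 ≤ t → frobSq (Φ t 0) ≤ n * abar ^ 2 := fun t ht => by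
    have h0 : 0 ≤ specNorm (Φ t 0) := (eunorm_nonneg _).trans
      (eunorm_mulVec_le_specNorm (Φ t 0) (v := 0) (by simp [eunorm]))
    refine (frobSq_le_card_mul_specNorm_sq _).trans ?_
    rw [Fintype.card_fin]
    exact mul_le_mul_of_nonneg_left (pow_le_pow_left₀ h0 (hΦbdd t 0 ht le_rfl) 2) n.cast_nonneg
  have hCfrob : ∀ t, 0 ≤ t → frobSq (C t) ≤ n * cbar ^ 2 := fun t ht => by
    have h0 : 0 ≤ specNorm (C t) := (eunorm_nonneg _).trans
      (eunorm_mulVec_le_specNorm (C t) (v := 0) (by simp [eunorm]))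
    refine (frobSq_le_card_mul_specNorm_sq _).trans ?_
    rw [Fintype.card_fin]
    exact mul_le_mul_of_nonneg_left (pow_le_pow_left₀ h0 (hCbdd t ht) 2) n.cast_nonneg
  have hB : ∀ t, 0 ≤ t → frobSq (B t) ≤ n * cbar ^ 2 * (n * abar ^ 2) := fun t ht =>
    (frobSq_mul_le _ _).trans
      (mul_le_mul (hCfrob t ht) (hΦfrob t ht) (frobSq_nonneg _) (by positivity))
  have hdet : ∀ t, IsUnit (Φ t 0).det := fun t => (det_transition_ne_zero hΦ0 hΦ 0 t).isUnit
  set X : ℝ → Matrix (Fin n) (Fin p) ℝ := fun t => Matrix.of fun a i => x i t a with hXdef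
  set Y : ℝ → Matrix (Fin n) (Fin p) ℝ := fun t => (Φ t 0)⁻¹ * X t with hYdef
  have hXY : ∀ t, X t = Φ t 0 * Y t := fun t =>
    (Matrix.mul_nonsing_inv_cancel_left _ _ (hdet t)).symm
  have hX : ∀ t, 0 ≤ t → ∀ a i, HasDerivAt (fun s => X s a i)
      ((A t * X t + L t * C t * (X t * Γᵀ)) a i) t := by
    intro t ht a i
    have hsum : (∑ j ∈ Finset.univ.filter (fun j => j ≠ i), Γ i j • (x j t - x i t))
        = fun a => (X t * Γᵀ) a i := by
      ext a
      have h1 : ∑ j ∈ Finset.univ.filter (fun j => j ≠ i), Γ i j • (x j t - x i t)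
          = ∑ j, Γ i j • (x j t - x i t) := by
        refine Finset.sum_subset (Finset.filter_subset _ _) fun j _ hj => ?_
        have : j = i := by simpa using hj
        simp [this]
      rw [h1]
      simp only [Finset.sum_apply, Pi.smul_apply, Pi.sub_apply, smul_eq_mul, mul_sub,
        Finset.sum_sub_distrib, ← Finset.sum_mul, hΓ.sum_row, zero_mul, sub_zero,
        Matrix.mul_apply, Matrix.transpose_apply, hXdef, Matrix.of_apply]
      exact Finset.sum_congr rfl fun j _ => mul_comm _ _
    have h := hx i t ht a
    rw [hsum] at h
    exact h
  have hY : ∀ t, 0 ≤ t → ∀ a i, HasDerivAt (fun s => Y s a i)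
      (((B t)ᵀ * B t * Y t * Γᵀ) a i) t := by
    intro t ht a i
    have h := hasDerivAt_mul_entry
      (hasDerivAt_inv_entry (hΦ 0 t) (hdet t).ne_zero) (hX t ht) a i
    have hval : -((Φ t 0)⁻¹ * A t) * X t + (Φ t 0)⁻¹ * (A t * X t + L t * C t * (X t * Γᵀ))
        = (B t)ᵀ * B t * Y t * Γᵀ := by
      have h1 : (Φ t 0)⁻¹ * (L t * C t * (X t * Γᵀ)) = (B t)ᵀ * B t * Y t * Γᵀ := by
        rw [hL, hXY]
        simp only [Matrix.mul_assoc, Matrix.nonsing_inv_mul_cancel_left _ _ (hdet t)]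
        simp only [hBdef, Matrix.transpose_mul, Matrix.mul_assoc]
      rw [Matrix.mul_add, h1, Matrix.neg_mul, Matrix.mul_assoc, neg_add_cancel_left]
    rwa [hval] at h
  set zbar : Fin n → ℝ := ∑ j, r j • x j 0 with hzbar
  set W : ℝ → Matrix (Fin p) (Fin n) ℝ := fun t => Matrix.of fun i a => Y t a i - zbar a with hWdef
  have hW : ∀ t, 0 ≤ t → ∀ i a, HasDerivAt (fun s => W s i a)
      ((Γ * W t * ((B t)ᵀ * B t)) i a) t := by
    intro t ht i a
    have hΓW : Γ * W t = Γ * (Y t)ᵀ := by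
      ext k a
      simp only [hWdef, Matrix.mul_apply, Matrix.of_apply, Matrix.transpose_apply, mul_sub,
        Finset.sum_sub_distrib, ← Finset.sum_mul, hΓ.sum_row, zero_mul, sub_zero]
    have hval : (Γ * W t * ((B t)ᵀ * B t)) i a = ((B t)ᵀ * B t * Y t * Γᵀ) a i := by
      rw [hΓW, ← Matrix.transpose_apply (Γ * (Y t)ᵀ * ((B t)ᵀ * B t))]
      simp only [Matrix.transpose_mul, Matrix.transpose_transpose, Matrix.mul_assoc]
    rw [hval]
    exact (hY t ht a i).sub_const _
  have hrW : ∀ t, 0 ≤ t → r ᵥ* W t = 0 := by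
    intro t ht
    ext a
    have hd : ∀ τ ∈ Set.Icc 0 t, HasDerivAt (fun s => (r ᵥ* W s) a) 0 τ := by
      intro τ hτ
      have h : HasDerivAt (fun s => (r ᵥ* W s) a)
          ((r ᵥ* (Γ * W τ * ((B τ)ᵀ * B τ))) a) τ := by
        simp only [Matrix.vecMul, dotProduct]
        exact HasDerivAt.fun_sum fun i _ => (hW τ hτ.1 i a).const_mul (r i)
      have hz : r ᵥ* (Γ * W τ * ((B τ)ᵀ * B τ)) = 0 := by
        rw [Matrix.mul_assoc, ← Matrix.vecMul_vecMul, hr1, Matrix.zero_vecMul]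
      rw [hz] at h
      exact h
    have hconst := sq_sub_le_of_sq_deriv_le ht hd (fun τ _ => hasDerivAt_const τ (0 : ℝ))
      fun τ _ => by norm_num
    have h0 : (r ᵥ* W 0) a = 0 := by
      simp only [Matrix.vecMul, dotProduct, hWdef, Matrix.of_apply, mul_sub,
        Finset.sum_sub_distrib, ← Finset.sum_mul, hr2, one_mul, hYdef, hΦ0, inv_one,
        Matrix.one_mul, hXdef, hzbar, Finset.sum_apply, Pi.smul_apply, smul_eq_mul, sub_self]
    rw [h0, sub_self, mul_zero, sub_zero] at hconst
    exact pow_eq_zero_iff two_ne_zero |>.1 (le_antisymm hconst (sq_nonneg _))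
  simp only [hgram] at hint hobs
  have hlim := tendsto_frobSq_of_suffExciting hΓ hconn hr1 hr2 hB hint hobs hW hrW
  intro i
  have hlim' : Tendsto (fun t => Real.sqrt (n * abar ^ 2 * frobSq (W t))) atTop (nhds 0) := by
    simpa using (hlim.const_mul ((n : ℝ) * abar ^ 2)).sqrt
  refine tendsto_of_tendsto_of_tendsto_of_le_of_le' tendsto_const_nhds hlim'
    (Eventually.of_forall fun t => eunorm_nonneg _) ?_
  filter_upwards [eventually_ge_atTop 0] with t ht
  have hdiff : x i t - xbar t = Φ t 0 *ᵥ W t i := by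
    have h1 : x i t = Φ t 0 *ᵥ fun a => Y t a i := by
      ext a
      exact congrFun (congrFun (hXY t) a) i
    rw [hxbar, h1, ← Matrix.mulVec_sub]
    rfl
  refine Real.le_sqrt_of_sq_le ?_
  rw [hdiff]
  refine (eunorm_mulVec_sq_le _ _).trans ?_
  refine mul_le_mul (hΦfrob t ht) ?_ (sq_nonneg _) (by positivity)
  rw [eunorm_sq]
  exact Finset.single_le_sum (f := fun i => ∑ a, W t i a ^ 2)
    (fun _ _ => Finset.sum_nonneg fun _ _ => sq_nonneg _) (Finset.mem_univ i)
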